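/- Let T > 0 and Ω_T = (0,1) × (0,T) ⊂ ℝ². Then there exists a constant C = C(T) > 0 such that for every function u that is smooth on an open neighborhood of the closure of Ω_T, ‖u‖_{L^∞(Ω_T)} ≤ C (1 + (‖u‖_{BMOₚ(Ω_T)} + ‖u‖_{L¹(Ω_T)}) (1 + log⁺ ‖u‖_{W₂^{2,1}(Ω_T)})). -/

import Mathlib

open MeasureTheory Real
open scoped ENNReal

noncomputable section

/-- The parabolic distance `‖z‖ₚ = max |x| √|t|` from `z = (x,t) ∈ ℝ²` to the origin. -/
def pnorm2 (z : ℝ × ℝ) : ℝ := max |z.1| (Real.sqrt |z.2|)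

/-- The parabolic cube of radius `r` centered at `z₀` in `ℝ²`. -/
def pCube2 (z₀ : ℝ × ℝ) (r : ℝ) : Set (ℝ × ℝ) := {z | pnorm2 (z - z₀) < r}

/-- The set of mean oscillations `⨍_Q |u - u_Q|` of `u` over parabolic cubes `Q ⊆ O`. -/
def oscSet2 (O : Set (ℝ × ℝ)) (u : ℝ × ℝ → ℝ) : Set ℝ :=
  {v | ∃ z₀ r, 0 < r ∧ pCube2 z₀ r ⊆ O ∧
    v = ⨍ z in pCube2 z₀ r, |u z - ⨍ w in pCube2 z₀ r, u w|}

/-- The parabolic BMO norm of `u` over `O ⊆ ℝ²`. -/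
def pBMO2 (O : Set (ℝ × ℝ)) (u : ℝ × ℝ → ℝ) : ℝ := sSup (oscSet2 O u)

/-- `log⁺ x = max (log x) 0`. -/
def logPlus (x : ℝ) : ℝ := max (Real.log x) 0

/-- The domain `Ω_T = (0,1) × (0,T)`. -/
def Omega (T : ℝ) : Set (ℝ × ℝ) := Set.Ioo (0 : ℝ) 1 ×ˢ Set.Ioo (0 : ℝ) T

/-- The domain `Ω̂_T = (-1,2) × (0,T)`. -/
def OmegaHat (T : ℝ) : Set (ℝ × ℝ) := Set.Ioo (-1 : ℝ) 2 ×ˢ Set.Ioo (0 : ℝ) T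

/-- The domain `Ω̃_T = (-1,2) × (-T,2T)`. -/
def OmegaTilde (T : ℝ) : Set (ℝ × ℝ) := Set.Ioo (-1 : ℝ) 2 ×ˢ Set.Ioo (-T) (2 * T)

/-- The spatial reflection extension of `u` from `[0,1]` to `(-1,2)` (in the `x` variable). -/
def extSpace (u : ℝ × ℝ → ℝ) : ℝ × ℝ → ℝ := fun p =>
  if p.1 < 0 then -3 * u (-p.1, p.2) + 4 * u (-p.1 / 2, p.2)
  else if 1 < p.1 then -3 * u (2 - p.1, p.2) + 4 * u ((3 - p.1) / 2, p.2)
  else u p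

/-- The temporal reflection extension from `[0,T]` to `(-T,2T)` (in the `t` variable). -/
def extTime (T : ℝ) (v : ℝ × ℝ → ℝ) : ℝ × ℝ → ℝ := fun p =>
  if p.2 < 0 then v (p.1, -p.2)
  else if T < p.2 then v (p.1, 2 * T - p.2)
  else v p

/-- The reflection extension `ũ` of `u` from `Ω_T` to `Ω̃_T = (-1,2) × (-T,2T)`. -/
def uext (T : ℝ) (u : ℝ × ℝ → ℝ) : ℝ × ℝ → ℝ := extTime T (extSpace u)

/-- The reflection extension `ũ`, extended by `0` outside `Ω̃_T`. -/
def uextZ (T : ℝ) (u : ℝ × ℝ → ℝ) : ℝ × ℝ → ℝ :=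
  (OmegaTilde T).indicator (uext T u)

/-- The partial derivative `u_x`. -/
def Dx2 (u : ℝ × ℝ → ℝ) : ℝ × ℝ → ℝ := fun p => fderiv ℝ u p (1, 0)

/-- The partial derivative `u_t`. -/
def Dt2 (u : ℝ × ℝ → ℝ) : ℝ × ℝ → ℝ := fun p => fderiv ℝ u p (0, 1)

/-- The `L²(O)` norm. -/
def L2norm2 (O : Set (ℝ × ℝ)) (v : ℝ × ℝ → ℝ) : ℝ :=
  (eLpNorm v 2 (volume.restrict O)).toReal

/-- The parabolic Sobolev norm
`‖u‖_{W₂^{2,1}(O)} = ‖u‖_{L²} + ‖u_x‖_{L²} + ‖u_{xx}‖_{L²} + ‖u_t‖_{L²}`. -/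
def W21norm (O : Set (ℝ × ℝ)) (u : ℝ × ℝ → ℝ) : ℝ :=
  L2norm2 O u + L2norm2 O (Dx2 u) + L2norm2 O (Dx2 (Dx2 u)) + L2norm2 O (Dt2 u)

/-- Iterated integral over the unit square. -/
def II (f : ℝ × ℝ → ℝ) : ℝ := ∫ y in (0:ℝ)..1, ∫ s in (0:ℝ)..1, f (y, s)

lemma II_inner_cont {f : ℝ × ℝ → ℝ} (hf : Continuous f) :
    Continuous fun y : ℝ => ∫ s in (0:ℝ)..1, f (y, s) :=
  intervalIntegral.continuous_parametric_intervalIntegral_of_continuous'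
    (f := fun y s => f (y, s)) (by simpa [Function.uncurry_def] using hf) 0 1

lemma II_mono {f g : ℝ × ℝ → ℝ} (hf : Continuous f) (hg : Continuous g)
    (h : ∀ y ∈ Set.Icc (0:ℝ) 1, ∀ s ∈ Set.Icc (0:ℝ) 1, f (y, s) ≤ g (y, s)) : II f ≤ II g := by
  unfold II
  refine intervalIntegral.integral_mono_on zero_le_one
    ((II_inner_cont hf).intervalIntegrable _ _) ((II_inner_cont hg).intervalIntegrable _ _) ?_
  intro y hy
  refine intervalIntegral.integral_mono_on zero_le_one
    (Continuous.intervalIntegrable (by fun_prop) _ _)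
    (Continuous.intervalIntegrable (by fun_prop) _ _) ?_
  intro s hs
  exact h y hy s hs

lemma II_sub {f g : ℝ × ℝ → ℝ} (hf : Continuous f) (hg : Continuous g) :
    II (fun z => f z - g z) = II f - II g := by
  unfold II
  rw [← intervalIntegral.integral_sub ((II_inner_cont hf).intervalIntegrable _ _)
    ((II_inner_cont hg).intervalIntegrable _ _)]
  congr 1; ext y
  exact intervalIntegral.integral_sub (Continuous.intervalIntegrable (by fun_prop) _ _)
    (Continuous.intervalIntegrable (by fun_prop) _ _)

lemma II_add {f g : ℝ × ℝ → ℝ} (hf : Continuous f) (hg : Continuous g) :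
    II (fun z => f z + g z) = II f + II g := by
  unfold II
  rw [← intervalIntegral.integral_add ((II_inner_cont hf).intervalIntegrable _ _)
    ((II_inner_cont hg).intervalIntegrable _ _)]
  congr 1; ext y
  exact intervalIntegral.integral_add (Continuous.intervalIntegrable (by fun_prop) _ _)
    (Continuous.intervalIntegrable (by fun_prop) _ _)

lemma II_const (c : ℝ) : II (fun _ => c) = c := by simp [II]

lemma II_mul (c : ℝ) (f : ℝ × ℝ → ℝ) : II (fun z => c * f z) = c * II f := by
  simp [II]

lemma II_nonneg {f : ℝ × ℝ → ℝ} (hf : Continuous f) (h : ∀ z, 0 ≤ f z) : 0 ≤ II f := by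
  have := II_mono continuous_const hf (f := fun _ => 0) (fun y _ s _ => h (y, s))
  rwa [II_const] at this

lemma II_abs {f : ℝ × ℝ → ℝ} (hf : Continuous f) : |II f| ≤ II (fun z => |f z|) := by
  rw [abs_le]
  constructor
  · have := II_mono (f := fun z => (-1) * |f z|) (g := f) (by fun_prop) hf
      (fun y _ s _ => by have := neg_abs_le (f (y, s)); linarith)
    rw [II_mul] at this; linarith
  · exact II_mono hf (by fun_prop) (fun y _ s _ => le_abs_self _)

lemma II_abs_sub_le {f g h : ℝ × ℝ → ℝ} (hf : Continuous f) (hg : Continuous g) (hh : Continuous h)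
    (H : ∀ y ∈ Set.Icc (0:ℝ) 1, ∀ s ∈ Set.Icc (0:ℝ) 1, |f (y, s) - g (y, s)| ≤ h (y, s)) :
    |II f - II g| ≤ II h := by
  rw [← II_sub hf hg]
  exact (II_abs (by fun_prop)).trans (II_mono (by fun_prop) hh H)

lemma scale1 {f : ℝ → ℝ} (hf : Continuous f) (h0 : ∀ x, 0 ≤ f x) {a : ℝ} (ha : 0 < a)
    (ha1 : a ≤ 1) : ∫ y in (0:ℝ)..1, f (a * y) ≤ a⁻¹ * ∫ y in (0:ℝ)..1, f y := by
  rw [intervalIntegral.integral_comp_mul_left f ha.ne']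
  simp only [mul_zero, mul_one, smul_eq_mul]
  gcongr
  exact intervalIntegral.integral_mono_interval le_rfl ha.le ha1
    (Filter.Eventually.of_forall h0) (hf.intervalIntegrable _ _)

lemma II_scale {f : ℝ × ℝ → ℝ} (hf : Continuous f) (h0 : ∀ z, 0 ≤ f z) {a b : ℝ} (ha : 0 < a)
    (ha1 : a ≤ 1) (hb : 0 < b) (hb1 : b ≤ 1) :
    II (fun z => f (a * z.1, b * z.2)) ≤ a⁻¹ * b⁻¹ * II f := by
  have hg : Continuous (fun z : ℝ × ℝ => f (a * z.1, b * z.2)) := by fun_prop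
  calc II (fun z => f (a * z.1, b * z.2))
      ≤ ∫ y in (0:ℝ)..1, b⁻¹ * ∫ s in (0:ℝ)..1, f (a * y, s) := by
        unfold II
        refine intervalIntegral.integral_mono_on zero_le_one
          ((II_inner_cont hg).intervalIntegrable _ _)
          (Continuous.intervalIntegrable ?_ _ _) ?_
        · exact continuous_const.mul ((II_inner_cont hf).comp (by fun_prop : Continuous fun y : ℝ => a * y))
        · intro y _
          exact scale1 (f := fun s => f (a * y, s)) (by fun_prop) (fun s => h0 _) hb hb1
    _ = b⁻¹ * ∫ y in (0:ℝ)..1, ∫ s in (0:ℝ)..1, f (a * y, s) := by simp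
    _ ≤ b⁻¹ * (a⁻¹ * II f) := by
        gcongr
        exact scale1 (f := fun y => ∫ s in (0:ℝ)..1, f (y, s)) (II_inner_cont hf)
          (fun y => intervalIntegral.integral_nonneg zero_le_one (fun s _ => h0 _)) ha ha1
    _ = _ := by ring

lemma II_swap {f : ℝ × ℝ → ℝ} (hf : Continuous f) :
    ∫ s in (0:ℝ)..1, ∫ y in (0:ℝ)..1, f (y, s) = II f := by
  unfold II
  refine MeasureTheory.intervalIntegral_intervalIntegral_swap (F := fun s y => f (y, s)) ?_
  refine IntegrableOn.mono_set (t := Set.Icc 0 1 ×ˢ Set.Icc 0 1) ?_ ?_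
  · refine ContinuousOn.integrableOn_compact (isCompact_Icc.prod isCompact_Icc) (Continuous.continuousOn ?_)
    exact hf.comp continuous_swap
  · rw [Set.uIoc_of_le zero_le_one]
    exact Set.prod_mono Set.Ioc_subset_Icc_self Set.Ioc_subset_Icc_self

lemma II_sq {f : ℝ × ℝ → ℝ} (hf : Continuous f) : (II fun z => |f z|) ^ 2 ≤ II fun z => (f z) ^ 2 := by
  set c := II fun z => |f z| with hc
  have h : II (fun z => 2 * c * |f z|) ≤ II (fun z => f z ^ 2 + c ^ 2) :=
    II_mono (by fun_prop) (by fun_prop)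
      (fun y _ s _ => by nlinarith [sq_nonneg (|f (y, s)| - c), sq_abs (f (y, s))])
  rw [II_add (by fun_prop) (by fun_prop), II_const, II_mul] at h
  rw [← hc] at h
  nlinarith

/-- The extrapolating functional. -/
def AA (w : ℝ × ℝ → ℝ) : ℝ := II (fun z => 2 * w (1 / 2 * z.1, 1 * z.2) - w z)

/-- Mean oscillation over the unit square. -/
def osc (w : ℝ × ℝ → ℝ) : ℝ := II (fun z => |w z - II w|)

lemma AA_sub_le {w : ℝ × ℝ → ℝ} (hw : Continuous w) : |AA w - II w| ≤ 5 * osc w := by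
  set m := II w with hm
  have h1 : |AA w - II (fun _ => m)| ≤
      II (fun z => 2 * |w (1 / 2 * z.1, 1 * z.2) - m| + |w z - m|) := by
    refine II_abs_sub_le (by fun_prop) (by fun_prop) (by fun_prop) ?_
    intro y _ s _
    dsimp only
    have e : 2 * w (1 / 2 * y, 1 * s) - w (y, s) - m
      = 2 * (w (1 / 2 * y, 1 * s) - m) - (w (y, s) - m) := by ring
    rw [e]
    refine (abs_sub _ _).trans ?_
    rw [abs_mul]; simp
  rw [II_const, II_add (by fun_prop) (by fun_prop), II_mul] at h1
  have h2 := II_scale (f := fun z => |w z - m|) (by fun_prop) (fun z => abs_nonneg _)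
    (a := 1 / 2) (b := 1) (by norm_num) (by norm_num) (by norm_num) (by norm_num)
  have h3 : osc w = II (fun z => |w z - m|) := rfl
  rw [h3]
  norm_num at h2 h1 ⊢
  linarith

lemma mean_step {w : ℝ × ℝ → ℝ} (hw : Continuous w) :
    |II (fun z => w (1 / 4 * z.1, 1 / 16 * z.2)) - II w| ≤ 64 * osc w := by
  set m := II w with hm
  have h1 : |II (fun z => w (1 / 4 * z.1, 1 / 16 * z.2)) - II (fun _ => m)| ≤
      II (fun z => |w (1 / 4 * z.1, 1 / 16 * z.2) - m|) :=
    II_abs_sub_le (by fun_prop) (by fun_prop) (by fun_prop) (fun y _ s _ => le_rfl)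
  rw [II_const] at h1
  have h2 := II_scale (f := fun z => |w z - m|) (by fun_prop) (fun z => abs_nonneg _)
    (a := 1 / 4) (b := 1 / 16) (by norm_num) (by norm_num) (by norm_num) (by norm_num)
  have h3 : osc w = II (fun z => |w z - m|) := rfl
  rw [h3]
  norm_num at h2 h1 ⊢
  linarith

lemma ftc_bound {g g' : ℝ → ℝ} (hg : ∀ x, HasDerivAt g (g' x) x) (hc : Continuous g')
    {a b : ℝ} (ha : a ∈ Set.Icc (0:ℝ) 1) (hb : b ∈ Set.Icc (0:ℝ) 1) :
    |g b - g a| ≤ ∫ x in (0:ℝ)..1, |g' x| := by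
  rw [← intervalIntegral.integral_eq_sub_of_hasDerivAt (fun x _ => hg x) (hc.intervalIntegrable _ _)]
  have key : ∀ a b : ℝ, a ∈ Set.Icc (0:ℝ) 1 → b ∈ Set.Icc (0:ℝ) 1 → a ≤ b →
      |∫ x in a..b, g' x| ≤ ∫ x in (0:ℝ)..1, |g' x| := by
    intro a b ha hb hab
    refine (intervalIntegral.abs_integral_le_integral_abs hab).trans ?_
    exact intervalIntegral.integral_mono_interval ha.1 hab hb.2
      (Filter.Eventually.of_forall fun x => abs_nonneg _) (hc.abs.intervalIntegrable _ _)
  rcases le_total a b with h | h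
  · exact key a b ha hb h
  · rw [intervalIntegral.integral_symm, abs_neg]; exact key b a hb ha h

lemma second_diff {g g' g'' : ℝ → ℝ} (hg : ∀ x, HasDerivAt g (g' x) x)
    (hg' : ∀ x, HasDerivAt g' (g'' x) x) (hc : Continuous g'')
    {y : ℝ} (hy : y ∈ Set.Icc (0:ℝ) 1) :
    |2 * g (1 / 2 * y) - g y - g 0| ≤ ∫ x in (0:ℝ)..1, |g'' x| := by
  obtain ⟨h0, h1⟩ := hy
  set M := ∫ x in (0:ℝ)..1, |g'' x| with hM
  have hM0 : 0 ≤ M := intervalIntegral.integral_nonneg zero_le_one (fun s _ => abs_nonneg _)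
  have hd : ∀ x ∈ Set.Icc 0 (y / 2), HasDerivWithinAt (fun x => g (x + y / 2) - g x)
      (g' (x + y / 2) - g' x) (Set.Icc 0 (y / 2)) x := fun x _ =>
    (((hg (x + y / 2)).comp_add_const x (y / 2)).sub (hg x)).hasDerivWithinAt
  have hb : ∀ x ∈ Set.Icc 0 (y / 2), ‖g' (x + y / 2) - g' x‖ ≤ M := by
    intro x hx
    exact ftc_bound hg' hc ⟨hx.1, by linarith [hx.2]⟩ ⟨by linarith [hx.1], by linarith [hx.2]⟩
  have := (convex_Icc 0 (y / 2)).norm_image_sub_le_of_norm_hasDerivWithin_le hd hb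
    (x := 0) (y := y / 2) ⟨le_rfl, by linarith⟩ ⟨by linarith, le_rfl⟩
  simp only [Real.norm_eq_abs, sub_zero, zero_add, add_halves] at this
  rw [abs_of_nonneg (by linarith : 0 ≤ y / 2)] at this
  rw [show 2 * g (1 / 2 * y) - g y - g 0 = -(g y - g (y / 2) - (g (y / 2) - g 0)) by
    rw [show 1 / 2 * y = y / 2 by ring]; ring, abs_neg]
  nlinarith

lemma AA_step {w wx wxx wt : ℝ × ℝ → ℝ} (hw : Continuous w)
    (hxx : Continuous wxx) (ht : Continuous wt)
    (d1 : ∀ x t, HasDerivAt (fun x => w (x, t)) (wx (x, t)) x)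
    (d2 : ∀ x t, HasDerivAt (fun x => wx (x, t)) (wxx (x, t)) x)
    (d3 : ∀ x t, HasDerivAt (fun t => w (x, t)) (wt (x, t)) t) :
    |AA w - AA (fun z => w (1 / 4 * z.1, 1 / 16 * z.2))| ≤
      20 * (II (fun z => |wxx z|) + II (fun z => |wt z|)) := by
  set P : ℝ → ℝ := fun s => ∫ x in (0:ℝ)..1, |wxx (x, s)| with hP
  set R : ℝ → ℝ := fun x => ∫ s in (0:ℝ)..1, |wt (x, s)| with hR
  have hPc : Continuous P :=
    intervalIntegral.continuous_parametric_intervalIntegral_of_continuous'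
    (f := fun s x => |wxx (x, s)|) (by simp only [Function.uncurry_def]; fun_prop) 0 1
  have hRc : Continuous R := II_inner_cont (f := fun z => |wt z|) (by fun_prop)
  have hP0 : ∀ s, 0 ≤ P s := fun s =>
    intervalIntegral.integral_nonneg zero_le_one (fun s _ => abs_nonneg _)
  have hR0 : ∀ s, 0 ≤ R s := fun s =>
    intervalIntegral.integral_nonneg zero_le_one (fun s _ => abs_nonneg _)
  have IP : II (fun z => P z.2) = II (fun z => |wxx z|) := by
    rw [← II_swap (f := fun z => |wxx z|) (by fun_prop)]
    simp [II, hP]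
  have IR : II (fun z => R z.1) = II (fun z => |wt z|) := by
    simp [II, hR]
  have h1 : |AA w - AA (fun z => w (1 / 4 * z.1, 1 / 16 * z.2))| ≤
      II (fun z => 2 * P z.2 + (2 * R (1 / 8 * z.1) + R (1 / 4 * z.1))) := by
    unfold AA
    refine II_abs_sub_le (by fun_prop) (by fun_prop) (by fun_prop) ?_
    intro y hy s hs
    have hy4 : 1 / 4 * y ∈ Set.Icc (0:ℝ) 1 := ⟨by linarith [hy.1], by linarith [hy.2]⟩
    have hs16 : 1 / 16 * s ∈ Set.Icc (0:ℝ) 1 := ⟨by linarith [hs.1], by linarith [hs.2]⟩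
    have a1 := second_diff (fun x => d1 x s) (fun x => d2 x s) (by fun_prop) hy
    have a2 := second_diff (fun x => d1 x s) (fun x => d2 x s) (by fun_prop) hy4
    have a3 := ftc_bound (fun t => d3 (1 / 8 * y) t) (by fun_prop) hs16 hs
    have a4 := ftc_bound (fun t => d3 (1 / 4 * y) t) (by fun_prop) hs16 hs
    rw [show 1 / 2 * (1 / 4 * y) = 1 / 8 * y by ring] at a2
    dsimp only
    rw [show 1 / 4 * (1 / 2 * y) = 1 / 8 * y by ring, one_mul]
    change _ ≤ P s at a1
    change _ ≤ P s at a2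
    change _ ≤ R (1 / 8 * y) at a3
    change _ ≤ R (1 / 4 * y) at a4
    rw [abs_le] at *
    obtain ⟨b1, c1⟩ := a1
    obtain ⟨b2, c2⟩ := a2
    obtain ⟨b3, c3⟩ := a3
    obtain ⟨b4, c4⟩ := a4
    constructor <;> linarith
  rw [II_add (by fun_prop) (by fun_prop), II_add (by fun_prop) (by fun_prop), II_mul, II_mul, IP] at h1
  have h2 := II_scale (f := fun z => R z.1) (by fun_prop) (fun z => hR0 _)
    (a := 1 / 8) (b := 1) (by norm_num) (by norm_num) (by norm_num) (by norm_num)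
  have h3 := II_scale (f := fun z => R z.1) (by fun_prop) (fun z => hR0 _)
    (a := 1 / 4) (b := 1) (by norm_num) (by norm_num) (by norm_num) (by norm_num)
  rw [IR] at h2 h3
  have h4 : 0 ≤ II (fun z => |wxx z|) := II_nonneg (by fun_prop) (fun z => abs_nonneg _)
  norm_num at h1 h2 h3 ⊢
  linarith

lemma pCube2_eq (c : ℝ × ℝ) {r : ℝ} (hr : 0 < r) :
    pCube2 c r = Set.Ioo (c.1 - r) (c.1 + r) ×ˢ Set.Ioo (c.2 - r ^ 2) (c.2 + r ^ 2) := by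
  ext z
  simp only [pCube2, pnorm2, Set.mem_ofPred_eq, max_lt_iff, Set.mem_prod, Set.mem_Ioo,
    Prod.fst_sub, Prod.snd_sub]
  rw [Real.sqrt_lt' hr, abs_lt, abs_lt]
  constructor <;> rintro ⟨⟨h1, h2⟩, h3, h4⟩ <;> refine ⟨⟨?_, ?_⟩, ?_, ?_⟩ <;> linarith

lemma interval1 (g : ℝ → ℝ) (x0 : ℝ) {σ ρ : ℝ} (hσ : σ = 1 ∨ σ = -1) (hρ : 0 < ρ) :
    ∫ x in Set.Ioo (x0 + σ * ρ - ρ) (x0 + σ * ρ + ρ), g x =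
      (2 * ρ) * ∫ y in (0:ℝ)..1, g (x0 + σ * (2 * ρ) * y) := by
  rw [← integral_Ioc_eq_integral_Ioo, ← intervalIntegral.integral_of_le (by linarith)]
  have h := intervalIntegral.smul_integral_comp_add_mul (a := 0) (b := 1) g (σ * (2 * ρ)) x0
  rcases hσ with rfl | rfl
  · simp only [smul_eq_mul] at h
    simp only [one_mul] at h ⊢
    rw [h]; congr 1 <;> ring
  · simp only [smul_eq_mul] at h
    have : (2 * ρ) * ∫ y in (0:ℝ)..1, g (x0 + -1 * (2 * ρ) * y) =
      - ((-1 * (2 * ρ)) * ∫ y in (0:ℝ)..1, g (x0 + -1 * (2 * ρ) * y)) := by ring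
    rw [this, h, intervalIntegral.integral_symm]
    congr 2 <;> ring

/-- Affine parametrization of a parabolic cube with corner `z0`. -/
def Phi (σ τ : ℝ) (z0 : ℝ × ℝ) (r : ℝ) (z : ℝ × ℝ) : ℝ × ℝ :=
  (z0.1 + σ * (2 * r) * z.1, z0.2 + τ * (2 * r ^ 2) * z.2)

/-- Center of the cube with corner `z0`. -/
def ctr (σ τ : ℝ) (z0 : ℝ × ℝ) (r : ℝ) : ℝ × ℝ := (z0.1 + σ * r, z0.2 + τ * r ^ 2)

lemma Phi_cont (σ τ : ℝ) (z0 : ℝ × ℝ) (r : ℝ) : Continuous (Phi σ τ z0 r) := by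
  unfold Phi; fun_prop

lemma cube_integral {f : ℝ × ℝ → ℝ} (hf : Continuous f) {σ τ : ℝ} (hσ : σ = 1 ∨ σ = -1)
    (hτ : τ = 1 ∨ τ = -1) (z0 : ℝ × ℝ) {r : ℝ} (hr : 0 < r) :
    ∫ z in pCube2 (ctr σ τ z0 r) r, f z = 4 * r ^ 3 * II (fun z => f (Phi σ τ z0 r z)) := by
  rw [pCube2_eq _ hr, Measure.volume_eq_prod, setIntegral_prod]
  · simp only [ctr, II, Phi]
    rw [interval1 _ _ hσ hr]
    have : ∀ x : ℝ, ∫ y in Set.Ioo (z0.2 + τ * r ^ 2 - r ^ 2) (z0.2 + τ * r ^ 2 + r ^ 2), f (x, y) =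
      (2 * r ^ 2) * ∫ s in (0:ℝ)..1, f (x, z0.2 + τ * (2 * r ^ 2) * s) := fun x =>
      interval1 (fun y => f (x, y)) _ hτ (by positivity)
    simp only [this, intervalIntegral.integral_const_mul]
    ring
  · refine IntegrableOn.mono_set (hf.continuousOn.integrableOn_compact
      (isCompact_Icc.prod isCompact_Icc)) (Set.prod_mono Set.Ioo_subset_Icc_self Set.Ioo_subset_Icc_self)

lemma cube_vol {σ τ : ℝ} (hσ : σ = 1 ∨ σ = -1)
    (hτ : τ = 1 ∨ τ = -1) (z0 : ℝ × ℝ) {r : ℝ} (hr : 0 < r) :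
    volume.real (pCube2 (ctr σ τ z0 r) r) = 4 * r ^ 3 := by
  have := cube_integral (f := fun _ => 1) continuous_const hσ hτ z0 hr
  simpa [II_const] using this

lemma cube_avg {f : ℝ × ℝ → ℝ} (hf : Continuous f) {σ τ : ℝ} (hσ : σ = 1 ∨ σ = -1)
    (hτ : τ = 1 ∨ τ = -1) (z0 : ℝ × ℝ) {r : ℝ} (hr : 0 < r) :
    ⨍ z in pCube2 (ctr σ τ z0 r) r, f z = II (fun z => f (Phi σ τ z0 r z)) := by
  rw [setAverage_eq, cube_vol hσ hτ z0 hr, cube_integral hf hσ hτ z0 hr, smul_eq_mul]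
  field_simp

lemma cube_osc {u : ℝ × ℝ → ℝ} (hu : Continuous u) {σ τ : ℝ} (hσ : σ = 1 ∨ σ = -1)
    (hτ : τ = 1 ∨ τ = -1) (z0 : ℝ × ℝ) {r : ℝ} (hr : 0 < r) :
    ⨍ z in pCube2 (ctr σ τ z0 r) r, |u z - ⨍ w in pCube2 (ctr σ τ z0 r) r, u w| =
      osc (fun z => u (Phi σ τ z0 r z)) := by
  rw [cube_avg hu hσ hτ z0 hr, cube_avg (by fun_prop) hσ hτ z0 hr]
  rfl

lemma Omega_sub (T : ℝ) : Omega T ⊆ Set.Icc (0:ℝ) 1 ×ˢ Set.Icc (0:ℝ) T :=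
  Set.prod_mono Set.Ioo_subset_Icc_self Set.Ioo_subset_Icc_self

lemma Omega_int {f : ℝ × ℝ → ℝ} (hf : Continuous f) (T : ℝ) : IntegrableOn f (Omega T) :=
  (hf.continuousOn.integrableOn_compact (isCompact_Icc.prod isCompact_Icc)).mono_set (Omega_sub T)

lemma Omega_open (T : ℝ) : IsOpen (Omega T) := isOpen_Ioo.prod isOpen_Ioo

lemma osc_le_BMO {u : ℝ × ℝ → ℝ} (hu : Continuous u) {T : ℝ} {σ τ : ℝ} (hσ : σ = 1 ∨ σ = -1)
    (hτ : τ = 1 ∨ τ = -1) (z0 : ℝ × ℝ) {r : ℝ} (hr : 0 < r)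
    (hsub : pCube2 (ctr σ τ z0 r) r ⊆ Omega T) :
    osc (fun z => u (Phi σ τ z0 r z)) ≤ pBMO2 (Omega T) u := by
  refine le_csSup ?_ ⟨ctr σ τ z0 r, r, hr, hsub, (cube_osc hu hσ hτ z0 hr).symm⟩
  obtain ⟨M, hM⟩ := (isCompact_Icc.prod isCompact_Icc :
    IsCompact (Set.Icc (0:ℝ) 1 ×ˢ Set.Icc (0:ℝ) T)).exists_bound_of_continuousOn hu.continuousOn
  refine ⟨2 * M, ?_⟩
  rintro v ⟨c, ρ, hρ, hs, rfl⟩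
  have hc : c = ctr 1 1 (c.1 - ρ, c.2 - ρ ^ 2) ρ := by simp [ctr]
  rw [hc, cube_osc hu (Or.inl rfl) (Or.inl rfl) _ hρ]
  rw [hc] at hs
  set w : ℝ × ℝ → ℝ := fun z => u (Phi 1 1 (c.1 - ρ, c.2 - ρ ^ 2) ρ z) with hw
  have hwc : Continuous w := hu.comp (Phi_cont _ _ _ _)
  have hcl : closure (pCube2 (ctr 1 1 (c.1 - ρ, c.2 - ρ ^ 2) ρ) ρ) ⊆
      Set.Icc (0:ℝ) 1 ×ˢ Set.Icc (0:ℝ) T :=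
    closure_minimal (hs.trans (Omega_sub T)) (isClosed_Icc.prod isClosed_Icc)
  rw [pCube2_eq _ hρ, closure_prod_eq, closure_Ioo (by linarith), closure_Ioo (by nlinarith [pow_pos hρ 2])] at hcl
  have hb : ∀ y ∈ Set.Icc (0:ℝ) 1, ∀ s ∈ Set.Icc (0:ℝ) 1, |w (y, s)| ≤ M := by
    intro y hy s hs
    refine hM _ (hcl ?_)
    have h2 := pow_pos hρ 2
    simp only [ctr, Phi, Set.mem_prod, Set.mem_Icc]
    refine ⟨⟨?_, ?_⟩, ?_, ?_⟩ <;> nlinarith [hy.1, hy.2, hs.1, hs.2]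
  have hm : |II w| ≤ M := by
    refine (II_abs hwc).trans ?_
    have := II_mono (f := fun z => |w z|) (g := fun _ => M) (by fun_prop) (by fun_prop) hb
    rwa [II_const] at this
  have := II_mono (f := fun z => |w z - II w|) (g := fun _ => 2 * M) (by fun_prop) (by fun_prop)
    (fun y hy s hs => (abs_sub _ _).trans (by linarith [hb y hy s hs]))
  rw [II_const] at this
  exact this

lemma L2_nonneg (O : Set (ℝ × ℝ)) (v : ℝ × ℝ → ℝ) : 0 ≤ L2norm2 O v := ENNReal.toReal_nonneg

lemma L2_sq {f : ℝ × ℝ → ℝ} (hf : Continuous f) (T : ℝ) :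
    L2norm2 (Omega T) f ^ 2 = ∫ z in Omega T, f z ^ 2 := by
  have hm : MemLp f 2 (volume.restrict (Omega T)) := by
    rw [memLp_two_iff_integrable_sq hf.aestronglyMeasurable]
    exact Omega_int (by fun_prop) T
  have h0 : 0 ≤ ∫ z in Omega T, f z ^ 2 := integral_nonneg fun z => sq_nonneg _
  rw [L2norm2, hm.eLpNorm_eq_integral_rpow_norm (by norm_num) (by norm_num)]
  simp only [ENNReal.toReal_ofNat, Real.rpow_ofNat, Real.norm_eq_abs, sq_abs]
  rw [ENNReal.toReal_ofReal (by positivity), ← Real.rpow_natCast, ← Real.rpow_mul h0]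
  norm_num

lemma II_L2 {f : ℝ × ℝ → ℝ} (hf : Continuous f) {T : ℝ} {σ τ : ℝ} (hσ : σ = 1 ∨ σ = -1)
    (hτ : τ = 1 ∨ τ = -1) (z0 : ℝ × ℝ) {r : ℝ} (hr : 0 < r)
    (hsub : pCube2 (ctr σ τ z0 r) r ⊆ Omega T) :
    4 * r ^ 3 * (II fun z => |f (Phi σ τ z0 r z)|) ^ 2 ≤ L2norm2 (Omega T) f ^ 2 := by
  have hP := Phi_cont σ τ z0 r
  have h1 := II_sq (f := fun z => f (Phi σ τ z0 r z)) (by fun_prop)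
  have h2 := cube_integral (f := fun z => f z ^ 2) (by fun_prop) hσ hτ z0 hr
  have h3 : ∫ z in pCube2 (ctr σ τ z0 r) r, f z ^ 2 ≤ ∫ z in Omega T, f z ^ 2 :=
    setIntegral_mono_set (Omega_int (by fun_prop) T)
      (Filter.Eventually.of_forall fun z => sq_nonneg _) hsub.eventuallyLE
  rw [L2_sq hf]
  refine le_trans ?_ h3
  rw [h2]
  gcongr

lemma II_L1 {f : ℝ × ℝ → ℝ} (hf : Continuous f) {T : ℝ} {σ τ : ℝ} (hσ : σ = 1 ∨ σ = -1)
    (hτ : τ = 1 ∨ τ = -1) (z0 : ℝ × ℝ) {r : ℝ} (hr : 0 < r)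
    (hsub : pCube2 (ctr σ τ z0 r) r ⊆ Omega T) :
    4 * r ^ 3 * |II fun z => f (Phi σ τ z0 r z)| ≤ ∫ z in Omega T, |f z| := by
  have hP := Phi_cont σ τ z0 r
  have h1 := II_abs (f := fun z => f (Phi σ τ z0 r z)) (by fun_prop)
  have h2 := cube_integral (f := fun z => |f z|) (by fun_prop) hσ hτ z0 hr
  have h3 : ∫ z in pCube2 (ctr σ τ z0 r) r, |f z| ≤ ∫ z in Omega T, |f z| :=
    setIntegral_mono_set (Omega_int (by fun_prop) T)
      (Filter.Eventually.of_forall fun z => abs_nonneg _) hsub.eventuallyLE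
  refine le_trans ?_ h3
  rw [h2]
  gcongr

lemma Dx_cd {u : ℝ × ℝ → ℝ} (hu : ContDiff ℝ (⊤ : ℕ∞) u) : ContDiff ℝ (⊤ : ℕ∞) (Dx2 u) :=
  (hu.fderiv_right (m := (⊤ : ℕ∞)) (by norm_cast)).clm_apply contDiff_const

lemma Dt_cd {u : ℝ × ℝ → ℝ} (hu : ContDiff ℝ (⊤ : ℕ∞) u) : ContDiff ℝ (⊤ : ℕ∞) (Dt2 u) :=
  (hu.fderiv_right (m := (⊤ : ℕ∞)) (by norm_cast)).clm_apply contDiff_const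

lemma Dx_has {u : ℝ × ℝ → ℝ} (hu : ContDiff ℝ (⊤ : ℕ∞) u) (a b x t : ℝ) :
    HasDerivAt (fun x => u (a + b * x, t)) (b * Dx2 u (a + b * x, t)) x := by
  have h1 : HasFDerivAt u (fderiv ℝ u (a + b * x, t)) (a + b * x, t) :=
    (hu.differentiable (by simp) _).hasFDerivAt
  have h2 : HasDerivAt (fun x => ((a + b * x, t) : ℝ × ℝ)) (b, 0) x := by
    have := (((hasDerivAt_id x).const_mul b).const_add a).prodMk (hasDerivAt_const x t)
    simpa using this
  have h3 := h1.comp_hasDerivAt x h2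
  have e : ((b, 0) : ℝ × ℝ) = b • ((1, 0) : ℝ × ℝ) := by simp
  rw [e, map_smul] at h3
  exact h3

lemma Dt_has {u : ℝ × ℝ → ℝ} (hu : ContDiff ℝ (⊤ : ℕ∞) u) (a b x t : ℝ) :
    HasDerivAt (fun t => u (x, a + b * t)) (b * Dt2 u (x, a + b * t)) t := by
  have h1 : HasFDerivAt u (fderiv ℝ u (x, a + b * t)) (x, a + b * t) :=
    (hu.differentiable (by simp) _).hasFDerivAt
  have h2 : HasDerivAt (fun t => ((x, a + b * t) : ℝ × ℝ)) (0, b) t := by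
    have := (hasDerivAt_const t x).prodMk (((hasDerivAt_id t).const_mul b).const_add a)
    simpa using this
  have h3 := h1.comp_hasDerivAt t h2
  have e : ((0, b) : ℝ × ℝ) = b • ((0, 1) : ℝ × ℝ) := by simp
  rw [e, map_smul] at h3
  exact h3

lemma step_bound {u : ℝ × ℝ → ℝ} (hu : ContDiff ℝ (⊤ : ℕ∞) u) {T : ℝ} {σ τ : ℝ}
    (hσ : σ = 1 ∨ σ = -1) (hτ : τ = 1 ∨ τ = -1) (z0 : ℝ × ℝ) {r q : ℝ} (hr : 0 < r)
    (hq : 0 ≤ q) (hrq : r ≤ q ^ 2)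
    (hsub : pCube2 (ctr σ τ z0 r) r ⊆ Omega T) :
    |AA (fun z => u (Phi σ τ z0 r z)) - AA (fun z => u (Phi σ τ z0 (r / 4) z))| ≤
      60 * q * W21norm (Omega T) u := by
  have hP := Phi_cont σ τ z0 r
  have huc := hu.continuous
  have hxc := (Dx_cd hu).continuous
  have hxxc := (Dx_cd (Dx_cd hu)).continuous
  have htc := (Dt_cd hu).continuous
  set W := W21norm (Omega T) u with hW
  have n1 := L2_nonneg (Omega T) u
  have n2 := L2_nonneg (Omega T) (Dx2 u)
  have n3 := L2_nonneg (Omega T) (Dx2 (Dx2 u))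
  have n4 := L2_nonneg (Omega T) (Dt2 u)
  have hW3 : L2norm2 (Omega T) (Dx2 (Dx2 u)) ≤ W := by rw [hW, W21norm]; linarith
  have hW4 : L2norm2 (Omega T) (Dt2 u) ≤ W := by rw [hW, W21norm]; linarith
  have hW0 : 0 ≤ W := n4.trans hW4
  have key : ∀ X L : ℝ, 0 ≤ L → L ≤ W → 4 * r ^ 3 * X ^ 2 ≤ L ^ 2 → r ^ 2 * X ≤ q * W / 2 := by
    intro X L hL hLW h
    refine le_of_sq_le_sq ?_ (by positivity)
    have h1 : L ^ 2 ≤ W ^ 2 := by gcongr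
    calc (r ^ 2 * X) ^ 2 = r * (r ^ 3 * X ^ 2) := by ring
      _ ≤ r * (W ^ 2 / 4) := by gcongr; linarith
      _ ≤ q ^ 2 * (W ^ 2 / 4) := by gcongr
      _ = (q * W / 2) ^ 2 := by ring
  have kx := key _ _ n3 hW3 (II_L2 hxxc hσ hτ z0 hr hsub)
  have kt := key _ _ n4 hW4 (II_L2 htc hσ hτ z0 hr hsub)
  have hs2 : |σ| = 1 := by rcases hσ with rfl | rfl <;> simp
  have ht2 : |τ| = 1 := by rcases hτ with rfl | rfl <;> simp
  have h := AA_step (w := fun z => u (Phi σ τ z0 r z))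
    (wx := fun z => σ * (2 * r) * Dx2 u (Phi σ τ z0 r z))
    (wxx := fun z => σ * (2 * r) * (σ * (2 * r) * Dx2 (Dx2 u) (Phi σ τ z0 r z)))
    (wt := fun z => τ * (2 * r ^ 2) * Dt2 u (Phi σ τ z0 r z))
    (by fun_prop) (by fun_prop) (by fun_prop)
    (fun x t => Dx_has hu z0.1 (σ * (2 * r)) x (z0.2 + τ * (2 * r ^ 2) * t))
    (fun x t => (Dx_has (Dx_cd hu) z0.1 (σ * (2 * r)) x (z0.2 + τ * (2 * r ^ 2) * t)).const_mul (σ * (2 * r)))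
    (fun x t => Dt_has hu z0.2 (τ * (2 * r ^ 2)) (z0.1 + σ * (2 * r) * x) t)
  have e1 : (fun z : ℝ × ℝ => u (Phi σ τ z0 (r / 4) z)) =
      fun z => u (Phi σ τ z0 r (1 / 4 * z.1, 1 / 16 * z.2)) := by
    ext z; simp only [Phi]; congr 2 <;> ring
  rw [e1]
  refine h.trans ?_
  simp only [abs_mul, hs2, ht2, II_mul, one_mul, abs_two, abs_pow, abs_of_pos hr]
  nlinarith

lemma AA_tendsto {u : ℝ × ℝ → ℝ} (hu : Continuous u) (σ τ : ℝ) (z0 : ℝ × ℝ) (r : ℝ) :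
    Filter.Tendsto (fun k : ℕ => AA (fun z => u (Phi σ τ z0 (r / 4 ^ k) z))) Filter.atTop
      (nhds (u z0)) := by
  have hc : Continuous (fun ρ : ℝ => AA (fun z => u (Phi σ τ z0 ρ z))) := by
    unfold AA II Phi
    refine intervalIntegral.continuous_parametric_intervalIntegral_of_continuous'
      (f := fun ρ y => ∫ s in (0:ℝ)..1, _) ?_ 0 1
    simp only [Function.uncurry_def]
    refine intervalIntegral.continuous_parametric_intervalIntegral_of_continuous'
      (f := fun (p : ℝ × ℝ) s => _) ?_ 0 1
    simp only [Function.uncurry_def]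
    fun_prop
  have h0 : AA (fun z => u (Phi σ τ z0 0 z)) = u z0 := by
    have : (fun z : ℝ × ℝ => u (Phi σ τ z0 0 z)) = fun _ => u z0 := by
      ext z; simp [Phi]
    rw [this, AA]
    have := II_const (2 * u z0 - u z0)
    rw [this]; ring
  have hr : Filter.Tendsto (fun k : ℕ => r / 4 ^ k) Filter.atTop (nhds 0) :=
    tendsto_const_nhds.div_atTop (tendsto_pow_atTop_atTop_of_one_lt (by norm_num))
  have := (hc.tendsto 0).comp hr
  rw [h0] at this
  exact this

lemma exists_N (W : ℝ) : ∃ N : ℕ, (N : ℝ) ≤ 2 * logPlus W + 1 ∧ W ≤ 2 ^ N := by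
  have hl : 0 ≤ logPlus W := le_max_right _ _
  refine ⟨⌈2 * logPlus W⌉₊, (Nat.ceil_lt_add_one (by linarith)).le, ?_⟩
  have h1 : 2 * logPlus W ≤ (⌈2 * logPlus W⌉₊ : ℝ) := Nat.le_ceil _
  rcases le_or_gt W 0 with h | h
  · exact h.trans (by positivity)
  · rw [← Real.log_le_log_iff h (by positivity), Real.log_pow]
    have : Real.log W ≤ logPlus W := le_max_left _ _
    have := Real.log_two_gt_d9
    nlinarith

lemma point_bound {u : ℝ × ℝ → ℝ} (hu : ContDiff ℝ (⊤ : ℕ∞) u) {T : ℝ} {σ τ : ℝ}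
    (hσ : σ = 1 ∨ σ = -1) (hτ : τ = 1 ∨ τ = -1) (z0 : ℝ × ℝ) {r : ℝ} (hr : 0 < r) (hr1 : r ≤ 1)
    (hsub : ∀ ρ, 0 < ρ → ρ ≤ r → pCube2 (ctr σ τ z0 ρ) ρ ⊆ Omega T) :
    |u z0| ≤ (200 + (4 * r ^ 3)⁻¹) *
      (1 + (pBMO2 (Omega T) u + ∫ z in Omega T, |u z|) * (1 + logPlus (W21norm (Omega T) u))) := by
  have huc := hu.continuous
  set W := W21norm (Omega T) u with hW
  set B := pBMO2 (Omega T) u with hB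
  set L := ∫ z in Omega T, |u z| with hL
  set w : ℕ → ℝ × ℝ → ℝ := fun k z => u (Phi σ τ z0 (r / 4 ^ k) z) with hw
  have hwc : ∀ k, Continuous (w k) := fun k => huc.comp (Phi_cont _ _ _ _)
  have hrk : ∀ k : ℕ, 0 < r / 4 ^ k := fun k => by positivity
  have hrk' : ∀ k : ℕ, r / 4 ^ k ≤ r := fun k =>
    div_le_self hr.le (one_le_pow₀ (by norm_num))
  have hs := fun k => hsub _ (hrk k) (hrk' k)
  have hosc : ∀ k, osc (w k) ≤ B := fun k => osc_le_BMO huc hσ hτ z0 (hrk k) (hs k)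
  have hl : 0 ≤ logPlus W := le_max_right _ _
  have hL0 : 0 ≤ L := integral_nonneg fun z => abs_nonneg _
  have hB0 : 0 ≤ B :=
    le_trans (II_nonneg (((hwc 0).sub continuous_const).abs) fun z => abs_nonneg _) (hosc 0)
  obtain ⟨N, hN1, hN2⟩ := exists_N W
  have hstep : ∀ k, dist (AA (w k)) (AA (w (k + 1))) ≤ 60 * W * (1 / 2) ^ k := by
    intro k
    have := step_bound hu (T := T) (q := (1 / 2) ^ k) hσ hτ z0 (hrk k) (by positivity) ?_ (hs k)
    · rw [Real.dist_eq]
      have e : r / 4 ^ (k + 1) = r / 4 ^ k / 4 := by rw [pow_succ]; field_simp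
      simp only [hw, e]
      linarith
    · rw [← pow_mul, mul_comm, pow_mul, div_eq_mul_inv, ← inv_pow]
      norm_num
      exact hr1
  have h1 : |AA (w N) - u z0| ≤ 120 := by
    have := dist_le_of_le_geometric_of_tendsto (1 / 2) (60 * W) (by norm_num) hstep
      (AA_tendsto huc σ τ z0 r) N
    rw [Real.dist_eq] at this
    refine this.trans ?_
    have : W * (1 / 2) ^ N ≤ 1 := by
      rw [one_div, inv_pow, ← div_eq_mul_inv, div_le_one (by positivity)]; exact hN2
    rw [div_le_iff₀ (by norm_num)]
    linarith
  have h2 := (AA_sub_le (hwc N)).trans (mul_le_mul_of_nonneg_left (hosc N) (by norm_num))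
  have h3 : ∀ n : ℕ, |II (w n) - II (w 0)| ≤ n * (64 * B) := by
    intro n
    induction n with
    | zero => simp
    | succ n ih =>
      have e : w (n + 1) = fun z => w n (1 / 4 * z.1, 1 / 16 * z.2) := by
        ext z; simp only [hw, Phi]; congr 2 <;> rw [pow_succ] <;> field_simp <;> ring
      have := (mean_step (hwc n)).trans (mul_le_mul_of_nonneg_left (hosc n) (by norm_num))
      rw [← e] at this
      have t := abs_sub_le (II (w (n + 1))) (II (w n)) (II (w 0))
      push_cast
      linarith
  have h4 : |II (w 0)| ≤ (4 * r ^ 3)⁻¹ * L := by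
    have := II_L1 huc hσ hτ z0 (hrk 0) (hs 0)
    rw [pow_zero, div_one] at this
    rw [inv_mul_eq_div, le_div_iff₀ (by positivity), mul_comm]
    simpa [hw] using this
  have h5 : |u z0| ≤ 120 + 5 * B + N * (64 * B) + (4 * r ^ 3)⁻¹ * L := by
    have := h3 N
    rw [abs_le] at *
    obtain ⟨a1, b1⟩ := h1
    obtain ⟨a2, b2⟩ := h2
    obtain ⟨a4, b4⟩ := h4
    obtain ⟨a5, b5⟩ := this
    constructor <;> linarith
  set c := (4 * r ^ 3)⁻¹ with hc
  have hc0 : 0 ≤ c := by positivity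
  have h6 : (N : ℝ) * (64 * B) ≤ (2 * logPlus W + 1) * (64 * B) := by gcongr
  have p1 : 0 ≤ c * (B + L * logPlus W + B * logPlus W) := by positivity
  have p2 : 0 ≤ L * logPlus W := by positivity
  have p3 : 0 ≤ B * logPlus W := by positivity
  nlinarith

lemma choose_corner {x0 b ρ0 : ℝ} (hx : x0 ∈ Set.Ioo 0 b) (hρ : 4 * ρ0 ≤ b) :
    ∃ σ : ℝ, (σ = 1 ∨ σ = -1) ∧ ∀ ρ, 0 < ρ → ρ ≤ ρ0 →
      Set.Ioo (x0 + σ * ρ - ρ) (x0 + σ * ρ + ρ) ⊆ Set.Ioo 0 b := by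
  rcases le_total x0 (b / 2) with h | h
  · refine ⟨1, Or.inl rfl, fun ρ h0 h1 => Set.Ioo_subset_Ioo ?_ ?_⟩ <;> linarith [hx.1, hx.2]
  · refine ⟨-1, Or.inr rfl, fun ρ h0 h1 => Set.Ioo_subset_Ioo ?_ ?_⟩ <;> linarith [hx.1, hx.2]

lemma global_bound {T : ℝ} (hT : 0 < T) {u : ℝ × ℝ → ℝ} (hu : ContDiff ℝ (⊤ : ℕ∞) u)
    {z0 : ℝ × ℝ} (hz : z0 ∈ Omega T) :
    |u z0| ≤ (200 + (4 * (min (1 / 4) T) ^ 3)⁻¹) *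
      (1 + (pBMO2 (Omega T) u + ∫ z in Omega T, |u z|) * (1 + logPlus (W21norm (Omega T) u))) := by
  set r := min (1 / 4) T with hr
  have hr0 : 0 < r := lt_min (by norm_num) hT
  have hr1 : r ≤ 1 / 4 := min_le_left _ _
  have hr2 : r ≤ T := min_le_right _ _
  obtain ⟨σ, hσ, h1⟩ := choose_corner hz.1 (ρ0 := r) (by linarith)
  obtain ⟨τ, hτ, h2⟩ := choose_corner hz.2 (ρ0 := r ^ 2) (by nlinarith)
  refine point_bound hu hσ hτ z0 hr0 (by linarith) ?_
  intro ρ h0 hρ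
  rw [pCube2_eq _ h0]
  exact Set.prod_mono (h1 ρ h0 hρ) (h2 (ρ ^ 2) (by positivity) (by gcongr))

open scoped Manifold ContDiff in
lemma exists_global {K V : Set (ℝ × ℝ)} (hK : IsClosed K) (hV : IsOpen V) (hKV : K ⊆ V)
    {u : ℝ × ℝ → ℝ} (hu : ContDiffOn ℝ (⊤ : ℕ∞) u V) :
    ∃ v : ℝ × ℝ → ℝ, ContDiff ℝ (⊤ : ℕ∞) v ∧ Set.EqOn v u K := by
  obtain ⟨f, hf0, hf1, -⟩ := exists_contMDiffMap_zero_one_nhds_of_isClosed (n := (⊤ : ℕ∞))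
    (𝓘(ℝ, ℝ × ℝ)) hV.isClosed_compl hK (Set.disjoint_compl_left_iff_subset.2 hKV)
  have hf : ContDiff ℝ (⊤ : ℕ∞) f := f.contMDiff.contDiff
  refine ⟨fun z => f z * u z, ?_, ?_⟩
  · rw [contDiff_iff_contDiffAt]
    intro z
    by_cases hz : z ∈ V
    · exact hf.contDiffAt.mul (hu.contDiffAt (hV.mem_nhds hz))
    · have h := (eventually_nhdsSet_iff_forall.1 hf0) z hz
      refine (contDiffAt_const (c := (0:ℝ))).congr_of_eventuallyEq ?_
      filter_upwards [h] with y hy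
      simp [hy]
  · intro z hz
    have := hf1.self_of_nhdsSet z hz
    simp [this]

lemma Dx_congr {O : Set (ℝ × ℝ)} (hO : IsOpen O) {u v : ℝ × ℝ → ℝ} (h : Set.EqOn v u O) :
    Set.EqOn (Dx2 v) (Dx2 u) O := by
  intro z hz
  have : v =ᶠ[nhds z] u := Filter.eventuallyEq_of_mem (hO.mem_nhds hz) h
  simp only [Dx2, this.fderiv_eq]

lemma Dt_congr {O : Set (ℝ × ℝ)} (hO : IsOpen O) {u v : ℝ × ℝ → ℝ} (h : Set.EqOn v u O) :
    Set.EqOn (Dt2 v) (Dt2 u) O := by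
  intro z hz
  have : v =ᶠ[nhds z] u := Filter.eventuallyEq_of_mem (hO.mem_nhds hz) h
  simp only [Dt2, this.fderiv_eq]

lemma L2_congr {O : Set (ℝ × ℝ)} (hO : IsOpen O) {u v : ℝ × ℝ → ℝ} (h : Set.EqOn v u O) :
    L2norm2 O v = L2norm2 O u := by
  unfold L2norm2
  rw [eLpNorm_congr_ae]
  exact (ae_restrict_iff' hO.measurableSet).2 (Filter.Eventually.of_forall h)

lemma BMO_congr {O : Set (ℝ × ℝ)} {u v : ℝ × ℝ → ℝ} (h : Set.EqOn v u O) :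
    pBMO2 O v = pBMO2 O u := by
  unfold pBMO2 oscSet2
  have key : ∀ z₀ r, 0 < r → pCube2 z₀ r ⊆ O →
      ⨍ z in pCube2 z₀ r, |v z - ⨍ w in pCube2 z₀ r, v w| =
      ⨍ z in pCube2 z₀ r, |u z - ⨍ w in pCube2 z₀ r, u w| := by
    intro z₀ r hr hs
    have hm : MeasurableSet (pCube2 z₀ r) := by
      rw [pCube2_eq _ hr]; exact measurableSet_Ioo.prod measurableSet_Ioo
    have e : ⨍ w in pCube2 z₀ r, v w = ⨍ w in pCube2 z₀ r, u w :=
      setAverage_congr_fun hm (Filter.Eventually.of_forall fun z hz => h (hs hz))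
    rw [e]
    exact setAverage_congr_fun hm (Filter.Eventually.of_forall fun z hz => by rw [h (hs hz)])
  congr 1
  ext x
  constructor
  · rintro ⟨z₀, r, hr, hs, rfl⟩
    exact ⟨z₀, r, hr, hs, key z₀ r hr hs⟩
  · rintro ⟨z₀, r, hr, hs, rfl⟩
    exact ⟨z₀, r, hr, hs, (key z₀ r hr hs).symm⟩

/-- **Parabolic logarithmic Sobolev inequality on `Ω_T = (0,1) × (0,T) ⊆ ℝ²`**
(Proposition 3.1, case `n = m = 1`), for functions smooth on a neighborhood of the closure
of `Ω_T`. -/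
theorem parabolic_log_sobolev_inequality_dim2 (T : ℝ) (hT : 0 < T) :
    ∃ C : ℝ, 0 < C ∧ ∀ (u : ℝ × ℝ → ℝ) (V : Set (ℝ × ℝ)),
      IsOpen V → closure (Omega T) ⊆ V → ContDiffOn ℝ (⊤ : ℕ∞) u V →
      (⨆ z ∈ Omega T, |u z|) ≤
        C * (1 + (pBMO2 (Omega T) u + ∫ z in Omega T, |u z|) *
          (1 + logPlus (W21norm (Omega T) u))) := by
  have hr0 : 0 < min (1 / 4) T := lt_min (by norm_num) hT
  refine ⟨200 + (4 * (min (1 / 4) T) ^ 3)⁻¹, by positivity, ?_⟩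
  intro u V hV hcl hu
  obtain ⟨v, hv, hvu⟩ := exists_global isClosed_closure hV hcl hu
  have hO := Omega_open T
  have he : Set.EqOn v u (Omega T) := hvu.mono subset_closure
  have e1 : pBMO2 (Omega T) v = pBMO2 (Omega T) u := BMO_congr he
  have e2 : W21norm (Omega T) v = W21norm (Omega T) u := by
    unfold W21norm
    rw [L2_congr hO he, L2_congr hO (Dx_congr hO he), L2_congr hO (Dx_congr hO (Dx_congr hO he)),
      L2_congr hO (Dt_congr hO he)]
  have e3 : ∫ z in Omega T, |v z| = ∫ z in Omega T, |u z| :=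
    setIntegral_congr_fun hO.measurableSet fun z hz => by simp only [he hz]
  have key : ∀ z ∈ Omega T, |u z| ≤ (200 + (4 * (min (1 / 4) T) ^ 3)⁻¹) *
      (1 + (pBMO2 (Omega T) u + ∫ z in Omega T, |u z|) *
          (1 + logPlus (W21norm (Omega T) u))) := by
    intro z hz
    have := global_bound hT hv hz
    rwa [e1, e2, e3, he hz] at this
  have hne : (1 / 2, T / 2) ∈ Omega T := by
    refine ⟨⟨?_, ?_⟩, ?_, ?_⟩ <;> norm_num <;> linarith
  have h0 := (abs_nonneg _).trans (key _ hne)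
  exact Real.iSup_le (fun z => Real.iSup_le (fun hz => key z hz) h0) h0

end
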